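/- arXiv:2303.11369 — 3 statements merged into one kernel-verified Lean document; each statement's English description precedes it below -/
import Mathlib

section
/- Let (Ω, F, P) be a probability space, G ⊆ F a sub-σ-algebra, E a nonempty finite type, and X, Y : Ω → E random variables that are conditionally i.i.d. given G. If Z : Ω → E is G-measurable, then P(X ≠ Y) ≤ 2·P(Z ≠ Y). -/
open MeasureTheory

/-- `P(X = x | G)`: the conditional expectation, given `G`, of the indicator of `{X = x}`. -/
noncomputable def condProbEq {Ω E : Type*} {m0 : MeasurableSpace Ω}
    (G : MeasurableSpace Ω) (μ : Measure[m0] Ω) (X : Ω → E) (x : E) : Ω → ℝ :=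
  μ[Set.indicator {ω | X ω = x} (fun _ => (1 : ℝ)) | G]

/-- `X` and `Y` are conditionally i.i.d. given the sub-σ-algebra `G`. -/
def CondIID {Ω E : Type*} {m0 : MeasurableSpace Ω}
    (G : MeasurableSpace Ω) (μ : Measure[m0] Ω) (X Y : Ω → E) : Prop :=
  (∀ x y : E,
    μ[Set.indicator {ω | X ω = x ∧ Y ω = y} (fun _ => (1 : ℝ)) | G]
      =ᵐ[μ] fun ω => condProbEq G μ X x ω * condProbEq G μ Y y ω) ∧
  (∀ x : E, condProbEq G μ X x =ᵐ[μ] condProbEq G μ Y x)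

/-- If `X, Y` are conditionally i.i.d. given `G` and `Z` is `G`-measurable, then
`P(X ≠ Y) ≤ 2 P(Z ≠ Y)`. -/
theorem prob_ne_le_two_mul_prob_ne
    {Ω E : Type*} [mΩ : MeasurableSpace Ω] (μ : Measure[mΩ] Ω) [IsProbabilityMeasure μ]
    [Fintype E] [Nonempty E] [MeasurableSpace E] [MeasurableSingletonClass E]
    (G : MeasurableSpace Ω) (hG : G ≤ mΩ)
    (X Y Z : Ω → E) (hX : Measurable[mΩ] X) (hY : Measurable[mΩ] Y)
    (hXY : CondIID G μ X Y)
    (hZ : Measurable[G] Z) :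
    μ {ω | X ω ≠ Y ω} ≤ 2 * μ {ω | Z ω ≠ Y ω} := by
  classical
  have key : ∀ z : E, μ ({ω | X ω = z} ∩ {ω | Z ω = z}) = μ ({ω | Y ω = z} ∩ {ω | Z ω = z}) := by
    intro z
    have hs : MeasurableSet[G] {ω | Z ω = z} := hZ (measurableSet_singleton z)
    have aux : ∀ W : Ω → E, Measurable[mΩ] W →
        ∫ ω in {ω | Z ω = z}, condProbEq G μ W z ω ∂μ
          = μ.real ({ω | W ω = z} ∩ {ω | Z ω = z}) := by
      intro W hW
      have hw : MeasurableSet[mΩ] {ω | W ω = z} := hW (measurableSet_singleton z)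
      unfold condProbEq
      rw [setIntegral_condExp hG ((integrable_const (1 : ℝ)).indicator hw) hs,
        integral_indicator_const (1 : ℝ) hw]
      simp [Measure.real, Measure.restrict_apply hw]
    have h : μ.real ({ω | X ω = z} ∩ {ω | Z ω = z})
        = μ.real ({ω | Y ω = z} ∩ {ω | Z ω = z}) := by
      rw [← aux X hX, ← aux Y hY]
      exact integral_congr_ae (ae_restrict_of_ae (hXY.2 z))
    exact (measureReal_eq_measureReal_iff).1 h
  have hZ' : Measurable[mΩ] Z := hZ.mono hG le_rfl
  have part : ∀ W : Ω → E, Measurable[mΩ] W →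
      μ {ω | W ω = Z ω} = ∑ z : E, μ ({ω | W ω = z} ∩ {ω | Z ω = z}) := by
    intro W hW
    rw [← measure_biUnion_finset]
    · congr 1
      ext ω
      simp [eq_comm]
    · intro a _ b _ hab
      refine Set.disjoint_left.2 ?_
      rintro ω ⟨h1, _⟩ ⟨h2, _⟩
      exact hab (h1.symm.trans h2)
    · intro z _
      exact (hW (measurableSet_singleton z)).inter (hZ' (measurableSet_singleton z))
  have meas : ∀ W : Ω → E, Measurable[mΩ] W → MeasurableSet[mΩ] {ω | W ω = Z ω} := by
    intro W hW
    have : {ω | W ω = Z ω} = ⋃ z : E, ({ω | W ω = z} ∩ {ω | Z ω = z}) := by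
      ext ω
      simp [eq_comm]
    rw [this]
    exact MeasurableSet.iUnion fun z =>
      (hW (measurableSet_singleton z)).inter (hZ' (measurableSet_singleton z))
  have hc : μ {ω | X ω = Z ω}ᶜ = μ {ω | Y ω = Z ω}ᶜ := by
    rw [prob_compl_eq_one_sub (meas X hX), prob_compl_eq_one_sub (meas Y hY),
      part X hX, part Y hY, Finset.sum_congr rfl fun z _ => key z]
  have hY2 : {ω | Z ω ≠ Y ω} = {ω | Y ω = Z ω}ᶜ := by
    ext ω
    simp [eq_comm]
  calc μ {ω | X ω ≠ Y ω} ≤ μ ({ω | X ω = Z ω}ᶜ ∪ {ω | Y ω = Z ω}ᶜ) := by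
        refine measure_mono fun ω h => ?_
        by_contra hn
        simp only [Set.mem_union, Set.mem_compl_iff, Set.mem_setOf_eq, not_or, not_not] at hn
        exact h (hn.1.trans hn.2.symm)
    _ ≤ μ {ω | X ω = Z ω}ᶜ + μ {ω | Y ω = Z ω}ᶜ := measure_union_le _ _
    _ = 2 * μ {ω | Z ω ≠ Y ω} := by rw [hc, hY2, two_mul]
end

section
/- Let (Ω, F, P) be a probability space, G ⊆ H ⊆ F two nested sub-σ-algebras, E a nonempty finite type, and X : Ω → E a random variable. Suppose Y_G : Ω → E is such that X and Y_G are conditionally i.i.d. given G, and Y_H : Ω → E is such that X and Y_H are conditionally i.i.d. given H. Then P(Y_H ≠ X) ≤ P(Y_G ≠ X). -/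
open MeasureTheory

/-- Conditionally i.i.d. variables: `P(X = x, Y = x | G) = P(X = x | G)^2`. -/
lemma CondIID.sq_ae {Ω E : Type*} {m0 : MeasurableSpace Ω} {G : MeasurableSpace Ω}
    {μ : Measure[m0] Ω} {X Y : Ω → E} (h : CondIID G μ X Y) (x : E) :
    μ[Set.indicator {ω | X ω = x ∧ Y ω = x} (fun _ => (1 : ℝ)) | G]
      =ᵐ[μ] fun ω => condProbEq G μ X x ω ^ 2 := by
  filter_upwards [h.1 x x, h.2 x] with ω h1 h2
  rw [h1, ← h2, sq]

lemma CondIID.integrable_sq {Ω E : Type*} {m0 : MeasurableSpace Ω} {G : MeasurableSpace Ω}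
    {μ : Measure[m0] Ω} {X Y : Ω → E} (h : CondIID G μ X Y) (x : E) :
    Integrable (fun ω => condProbEq G μ X x ω ^ 2) μ :=
  integrable_condExp.congr (h.sq_ae x)

/-- `P(X = Y)` is the expected sum of squared conditional probabilities. -/
lemma CondIID.measureReal_eq {Ω E : Type*} {m0 : MeasurableSpace Ω} {G : MeasurableSpace Ω}
    {μ : Measure[m0] Ω} [IsProbabilityMeasure μ]
    [Fintype E] [MeasurableSpace E] [MeasurableSingletonClass E] {X Y : Ω → E}
    (hG : G ≤ m0) (hX : Measurable[m0] X) (hY : Measurable[m0] Y) (h : CondIID G μ X Y) :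
    μ.real {ω | Y ω = X ω} = ∑ x : E, ∫ ω, condProbEq G μ X x ω ^ 2 ∂μ := by
  have hm : ∀ x : E, MeasurableSet[m0] {ω | X ω = x ∧ Y ω = x} := fun x =>
    (hX (measurableSet_singleton x)).inter (hY (measurableSet_singleton x))
  have hu : {ω | Y ω = X ω} = ⋃ x : E, {ω | X ω = x ∧ Y ω = x} := by
    ext ω
    simp
  have hd : Pairwise (Function.onFun Disjoint fun x : E => {ω | X ω = x ∧ Y ω = x}) := by
    intro x y hxy
    refine Set.disjoint_left.2 ?_
    rintro ω ⟨h1, _⟩ ⟨h2, _⟩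
    exact hxy (h1.symm.trans h2)
  rw [hu, measureReal_iUnion_fintype hd hm]
  refine Finset.sum_congr rfl fun x _ => ?_
  rw [← integral_congr_ae (h.sq_ae x), integral_condExp hG, integral_indicator_const _ (hm x)]
  simp

/-- The probability that an independent posterior sample disagrees with the truth is
nonincreasing in the conditioning σ-algebra. -/
theorem prob_sample_ne_antitone
    {Ω E : Type*} [mΩ : MeasurableSpace Ω] (μ : Measure[mΩ] Ω) [IsProbabilityMeasure μ]
    [Fintype E] [Nonempty E] [MeasurableSpace E] [MeasurableSingletonClass E]
    (G H : MeasurableSpace Ω) (hGH : G ≤ H) (hH : H ≤ mΩ)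
    (X YG YH : Ω → E)
    (hX : Measurable[mΩ] X) (hYG : Measurable[mΩ] YG) (hYH : Measurable[mΩ] YH)
    (hG_iid : CondIID G μ X YG) (hH_iid : CondIID H μ X YH) :
    μ {ω | YH ω ≠ X ω} ≤ μ {ω | YG ω ≠ X ω} := by
  have hsum : μ.real {ω | YG ω = X ω} ≤ μ.real {ω | YH ω = X ω} := by
    rw [hG_iid.measureReal_eq (hGH.trans hH) hX hYG, hH_iid.measureReal_eq hH hX hYH]
    refine Finset.sum_le_sum fun x _ => ?_
    have hconv : ConvexOn ℝ Set.univ (fun t : ℝ => t ^ 2) := even_two.convexOn_pow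
    have hJ := hconv.map_condExp_le_univ (μ := μ) (hGH.trans hH)
      (f := condProbEq H μ X x)
      (continuous_pow 2).lowerSemicontinuous integrable_condExp (hH_iid.integrable_sq x)
    have htower : μ[condProbEq H μ X x | G] =ᵐ[μ] condProbEq G μ X x :=
      condExp_condExp_of_le hGH hH
    have hint := integral_condExp (μ := μ) (hGH.trans hH)
      (f := (fun t : ℝ => t ^ 2) ∘ condProbEq H μ X x)
    refine le_trans ?_ hint.le
    refine integral_mono_ae (hG_iid.integrable_sq x) integrable_condExp ?_
    filter_upwards [hJ, htower] with ω h1 h2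
    simpa [h2] using h1
  have hc : ∀ Y : Ω → E, Measurable[mΩ] Y →
      μ.real {ω | Y ω ≠ X ω} = 1 - μ.real {ω | Y ω = X ω} := fun Y hY =>
    probReal_compl_eq_one_sub (measurableSet_eq_fun hY hX)
  refine (ENNReal.toReal_le_toReal (measure_ne_top _ _) (measure_ne_top _ _)).1 ?_
  change μ.real _ ≤ μ.real _
  rw [hc _ hYH, hc _ hYG]
  linarith
end

section
/- Let (Ω, F, P) be a probability space, G ⊆ F a sub-σ-algebra, E a nonempty finite type, and X, Y : Ω → E random variables that are conditionally i.i.d. given G. Then for every function f : E → ℝ and every function g : E → F' into an arbitrary type F', E[ f(X)·1{g(X) ≠ g(Y)} ] = E[ f(Y)·1{g(X) ≠ g(Y)} ]. -/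
open MeasureTheory

/-- Expansion of `E[h(X, Y)]` over the finitely many values of `(X, Y)`. -/
theorem integral_pair_expand {Ω E : Type*} {_ : MeasurableSpace Ω} (μ : Measure Ω)
    [IsProbabilityMeasure μ] [Fintype E] [MeasurableSpace E] [MeasurableSingletonClass E]
    (X Y : Ω → E) (hX : Measurable X) (hY : Measurable Y) (h : E → E → ℝ) :
    ∫ ω, h (X ω) (Y ω) ∂μ = ∑ x, ∑ y, h x y *
      ∫ ω, Set.indicator {ω | X ω = x ∧ Y ω = y} (fun _ => (1 : ℝ)) ω ∂μ := by
  classical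
  have hm : ∀ x y, MeasurableSet {ω | X ω = x ∧ Y ω = y} := fun x y =>
    (hX (measurableSet_singleton x)).inter (hY (measurableSet_singleton y))
  have hi : ∀ x y, Integrable
      (fun ω => h x y * Set.indicator {ω | X ω = x ∧ Y ω = y} (fun _ => (1 : ℝ)) ω) μ :=
    fun x y => ((integrable_const (1 : ℝ)).indicator (hm x y)).const_mul _
  have e : ∀ ω, h (X ω) (Y ω) = ∑ x, ∑ y, h x y *
      Set.indicator {ω | X ω = x ∧ Y ω = y} (fun _ => (1 : ℝ)) ω := by
    intro ω
    rw [Finset.sum_eq_single (X ω), Finset.sum_eq_single (Y ω)]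
    · simp
    · intro y _ hy
      simp [Ne.symm hy]
    · simp
    · intro x _ hx
      simp [Ne.symm hx]
    · simp
  simp_rw [e]
  rw [integral_finsetSum _ (fun x _ => integrable_finsetSum _ (fun y _ => hi x y))]
  refine Finset.sum_congr rfl fun x _ => ?_
  rw [integral_finsetSum _ (fun y _ => hi x y)]
  exact Finset.sum_congr rfl fun y _ => integral_const_mul _ _

/-- If `X, Y` are conditionally i.i.d. given `G`, then for any `f : E → ℝ` and
`g : E → F'`, `E[f(X) 1{g(X) ≠ g(Y)}] = E[f(Y) 1{g(X) ≠ g(Y)}]`. -/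
theorem integral_on_disagreement_symm
    {Ω E F' : Type*} [mΩ : MeasurableSpace Ω] (μ : Measure[mΩ] Ω) [IsProbabilityMeasure μ]
    [Fintype E] [Nonempty E] [MeasurableSpace E] [MeasurableSingletonClass E]
    (G : MeasurableSpace Ω) (hG : G ≤ mΩ)
    (X Y : Ω → E) (hX : Measurable[mΩ] X) (hY : Measurable[mΩ] Y)
    (hXY : CondIID G μ X Y)
    (f : E → ℝ) (g : E → F') :
    ∫ ω, Set.indicator {ω' | g (X ω') ≠ g (Y ω')} (fun ω' => f (X ω')) ω ∂μ =
      ∫ ω, Set.indicator {ω' | g (X ω') ≠ g (Y ω')} (fun ω' => f (Y ω')) ω ∂μ := by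
  classical
  obtain ⟨h1, h2⟩ := hXY
  have key : ∀ x y : E,
      ∫ ω, Set.indicator {ω | X ω = x ∧ Y ω = y} (fun _ => (1 : ℝ)) ω ∂μ =
      ∫ ω, Set.indicator {ω | X ω = y ∧ Y ω = x} (fun _ => (1 : ℝ)) ω ∂μ := by
    intro x y
    rw [← integral_condExp hG, ← integral_condExp (μ := μ)
      (f := Set.indicator {ω | X ω = y ∧ Y ω = x} (fun _ => (1 : ℝ))) hG]
    apply integral_congr_ae
    filter_upwards [h1 x y, h1 y x, h2 x, h2 y] with ω a b c d
    rw [a, b, c, d, mul_comm]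
  have eX := integral_pair_expand μ X Y hX hY (fun x y => if g x ≠ g y then f x else 0)
  have eY := integral_pair_expand μ X Y hX hY (fun x y => if g x ≠ g y then f y else 0)
  simp only [Set.indicator_apply, Set.mem_ofPred_eq] at eX eY key ⊢
  rw [eX, eY, Finset.sum_comm]
  refine Finset.sum_congr rfl fun y _ => Finset.sum_congr rfl fun x _ => ?_
  rw [key x y]
  simp only [ne_comm]
end
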